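/- arXiv:1810.01383 — 4 statements merged into one kernel-verified Lean document; each statement's English description precedes it below -/
import Mathlib

section
/- Let s : S ↣ I and t : T ↣ I be subunits in a braided monoidal category C. Then s factors through t (i.e. s ≤ t as subobjects of I) if and only if id_S ⊗ t : S ⊗ T → S ⊗ I is an isomorphism, and this holds if and only if t ⊗ id_S : T ⊗ S → I ⊗ S is an isomorphism. -/
/-!
The two invertibility conditions agree by naturality of the braiding. If `S ◁ t` is invertible,
then `S ≅ S ⊗ 𝟙 ≅ S ⊗ T ⟶ 𝟙 ⊗ T ≅ T`, the arrow being `s ▷ T`, factors `s` through `t`.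
Conversely, if `s = f ≫ t`, then `f ▷ S ≫ t ▷ S = s ▷ S` is invertible, so `S` is a retract of
`T ⊗ S`. By the exchange law `t ▷ S` is then a retract of `t ▷ (T ⊗ S)`, which is invertible
because `t ▷ T` is, and retracts of isomorphisms are isomorphisms.
-/

open CategoryTheory MonoidalCategory

lemma isIso_whiskerLeft_iff_whiskerRight {C : Type*} [Category C] [MonoidalCategory C]
    [BraidedCategory C] (S : C) {T U : C} (t : T ⟶ U) : IsIso (S ◁ t) ↔ IsIso (t ▷ S) := by
  have h := BraidedCategory.braiding_naturality_right S t
  constructor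
  · intro _
    have e : t ▷ S = (β_ S T).inv ≫ S ◁ t ≫ (β_ S U).hom := by simp [h]
    rw [e]
    infer_instance
  · intro _
    have e : S ◁ t = (β_ S T).hom ≫ t ▷ S ≫ (β_ S U).inv := by simp
    rw [e]
    infer_instance

/-- If whiskering by `X` inverts `t`, so does whiskering by any retract of `X`. -/
lemma isIso_whiskerRight_of_retract {C : Type*} [Category C] [MonoidalCategory C]
    {S X T U : C} (t : T ⟶ U) (i : S ⟶ X) (r : X ⟶ S) (h : i ≫ r = 𝟙 S) [IsIso (t ▷ X)] :
    IsIso (t ▷ S) := by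
  refine ⟨U ◁ i ≫ inv (t ▷ X) ≫ T ◁ r, ?_, ?_⟩
  · rw [← whisker_exchange_assoc, IsIso.hom_inv_id_assoc, ← whiskerLeft_comp, h,
      whiskerLeft_id]
  · rw [Category.assoc, Category.assoc, whisker_exchange, IsIso.inv_hom_id_assoc,
      ← whiskerLeft_comp, h, whiskerLeft_id]

/-- Lemma 2.3 of "Tensor topology": a subunit `s` factors through a subunit `t`
iff `S ⊗ t` is invertible, iff `t ⊗ S` is invertible. -/
theorem stmt1 {C : Type*} [Category C] [MonoidalCategory C] [BraidedCategory C]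
    {S T : C} (s : S ⟶ 𝟙_ C) (t : T ⟶ 𝟙_ C) [Mono s] [Mono t]
    (hs : IsIso (s ▷ S)) (ht : IsIso (t ▷ T)) :
    ((∃ f : S ⟶ T, f ≫ t = s) ↔ IsIso (S ◁ t)) ∧
      (IsIso (S ◁ t) ↔ IsIso (t ▷ S)) := by
  refine ⟨⟨?_, ?_⟩, isIso_whiskerLeft_iff_whiskerRight S t⟩
  · rintro ⟨f, hf⟩
    rw [isIso_whiskerLeft_iff_whiskerRight]
    have : IsIso (t ▷ (T ⊗ S)) := by
      rw [whiskerRight_tensor]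
      infer_instance
    refine isIso_whiskerRight_of_retract (X := T ⊗ S) t
      ((λ_ S).inv ≫ inv (s ▷ S) ≫ f ▷ S) (t ▷ S ≫ (λ_ S).hom) ?_
    have h : f ▷ S ≫ t ▷ S = s ▷ S := by rw [← comp_whiskerRight, hf]
    simp only [Category.assoc]
    rw [← Category.assoc (f ▷ S), h, IsIso.inv_hom_id_assoc, Iso.inv_hom_id]
  · intro _
    refine ⟨(ρ_ S).inv ≫ inv (S ◁ t) ≫ s ▷ T ≫ (λ_ T).hom, ?_⟩
    simp only [Category.assoc]
    rw [← leftUnitor_naturality, ← whisker_exchange_assoc, IsIso.inv_hom_id_assoc,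
      unitors_equal, rightUnitor_naturality, Iso.inv_hom_id_assoc]
end

section
/- Let s : S ↣ I be a subunit in a braided monoidal category C. Then the endofunctor F(A) = S ⊗ A carries a comonad structure with counit ε_A = λ_A ∘ (s ⊗ id_A) : S ⊗ A → A and comultiplication δ_A = (λ_{S⊗A} ∘ (s ⊗ id_{S⊗A}))⁻¹ : S ⊗ A → S ⊗ (S ⊗ A); moreover the comultiplication δ is a natural isomorphism, and the component ε_I : S ⊗ I → I of the counit is a monomorphism. -/
/-!
Write `ε A = (s ▷ A) ≫ (λ_ A).hom`. Everything follows from the identity `ε (S ⊗ A) = S ◁ ε A`,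
i.e. `εF = Fε`. For `A = 𝟙_ C` it says that the two maps `S ⊗ S ⟶ S` given by `s` on either factor
agree (`subunit_left_eq_right`), which holds since both become `s ⊗ s` after composing with the
monomorphism `s`; the general case is obtained by tensoring with `A` on the right.
As `s ▷ S` is invertible, so is `ε (S ⊗ A)`, and `δ A` is its inverse. The identity turns the counit
law into `δ A ≫ ε (S ⊗ A) = 𝟙`, and gives coassociativity because `S ◁ δ A` and `δ (S ⊗ A)` are then
inverses of the same map.
-/

open CategoryTheory MonoidalCategory

section

variable {C : Type*} [Category C] [MonoidalCategory C] {S : C} (s : S ⟶ 𝟙_ C)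

theorem subunit_left_eq_right [Mono s] :
    (s ▷ S) ≫ (λ_ S).hom = (S ◁ s) ≫ (ρ_ S).hom := by
  rw [← cancel_mono s, Category.assoc, Category.assoc, ← leftUnitor_naturality,
    ← rightUnitor_naturality, ← whisker_exchange_assoc, unitors_equal]

/-- The identity `εF = Fε`. -/
theorem subunit_counit_comm [Mono s] (A : C) :
    (s ▷ (S ⊗ A)) ≫ (λ_ (S ⊗ A)).hom = S ◁ ((s ▷ A) ≫ (λ_ A).hom) := by
  have h := congrArg (fun f => (α_ S S A).inv ≫ f ▷ A) (subunit_left_eq_right s)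
  simpa using h

theorem subunit_counit_natural {A B : C} (f : A ⟶ B) :
    (S ◁ f) ≫ (s ▷ B) ≫ (λ_ B).hom = ((s ▷ A) ≫ (λ_ A).hom) ≫ f := by
  rw [whisker_exchange_assoc, leftUnitor_naturality, Category.assoc]

theorem subunit_counit_isIso (hs : IsIso (s ▷ S)) (A : C) :
    IsIso ((s ▷ (S ⊗ A)) ≫ (λ_ (S ⊗ A)).hom) := by
  have h : s ▷ (S ⊗ A) = (α_ S S A).inv ≫ (s ▷ S) ▷ A ≫ (α_ (𝟙_ C) S A).hom := by simp
  rw [h]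
  infer_instance

end

/-- Proposition 4.9 of "Tensor topology" (one direction): a subunit `s : S ↣ I` makes
the endofunctor `A ↦ S ⊗ A` a comonad whose counit `ε_A = λ_A ∘ (s ⊗ id_A)` is natural,
whose comultiplication `δ_A = (λ_{S⊗A} ∘ (s ⊗ id_{S⊗A}))⁻¹` is a natural isomorphism
(expressed as a two-sided inverse), satisfying the counit and coassociativity laws,
and whose counit component `ε_I` is a monomorphism. -/
theorem stmt10 {C : Type*} [Category C] [MonoidalCategory C] [BraidedCategory C]
    {S : C} (s : S ⟶ 𝟙_ C) [Mono s] (hs : IsIso (s ▷ S)) :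
    -- naturality of the counit ε
    (∀ {A B : C} (f : A ⟶ B),
      (S ◁ f) ≫ (s ▷ B) ≫ (λ_ B).hom = ((s ▷ A) ≫ (λ_ A).hom) ≫ f) ∧
    -- the comultiplication: inverse of ε at S ⊗ A, natural, counital, coassociative
    (∃ δ : ∀ A : C, S ⊗ A ⟶ S ⊗ (S ⊗ A),
      (∀ A : C, δ A ≫ (s ▷ (S ⊗ A)) ≫ (λ_ (S ⊗ A)).hom = 𝟙 (S ⊗ A)) ∧
      (∀ A : C, ((s ▷ (S ⊗ A)) ≫ (λ_ (S ⊗ A)).hom) ≫ δ A = 𝟙 (S ⊗ (S ⊗ A))) ∧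
      (∀ {A B : C} (f : A ⟶ B), (S ◁ f) ≫ δ B = δ A ≫ (S ◁ (S ◁ f))) ∧
      (∀ A : C, δ A ≫ (S ◁ ((s ▷ A) ≫ (λ_ A).hom)) = 𝟙 (S ⊗ A)) ∧
      (∀ A : C, δ A ≫ (S ◁ δ A) = δ A ≫ δ (S ⊗ A))) ∧
    -- the counit component at the tensor unit is monic
    Mono ((s ▷ 𝟙_ C) ≫ (λ_ (𝟙_ C)).hom) := by
  have hiso := subunit_counit_isIso s hs
  refine ⟨fun f => subunit_counit_natural s f,
    ⟨fun A => inv ((s ▷ (S ⊗ A)) ≫ (λ_ (S ⊗ A)).hom), fun A => IsIso.inv_hom_id _,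
      fun A => IsIso.hom_inv_id _, fun {A B} f => ?_, fun A => ?_, fun A => ?_⟩, ?_⟩
  · rw [IsIso.comp_inv_eq, Category.assoc, IsIso.eq_inv_comp]
    exact (subunit_counit_natural s (S ◁ f)).symm
  · rw [← subunit_counit_comm]
    exact IsIso.inv_hom_id _
  · congr 1
    -- both sides are inverse to `ε (S ⊗ (S ⊗ A)) = S ◁ ε (S ⊗ A)`
    apply IsIso.eq_inv_of_hom_inv_id
    rw [subunit_counit_comm, ← whiskerLeft_comp, IsIso.hom_inv_id, whiskerLeft_id]
  · -- `ε (𝟙_ C)` is `s` up to the right unitor of `S`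
    rw [unitors_equal, rightUnitor_naturality]
    infer_instance
end

section
/- Let C be a firm braided monoidal category, and let Σ be the class of morphisms consisting of all identities together with all morphisms of the form λ_A ∘ (s ⊗ id_A) : S ⊗ A → A for an object A and a subunit s : S ↣ I. Then Σ admits a calculus of right fractions: Σ contains all identities and is closed under composition; for every morphism in Σ of the form λ_C ∘ (s ⊗ id_C) : S ⊗ C → C and every f : B → C there exist a morphism in Σ with target B and a morphism g completing a commutative square (the right Ore condition, witnessed by λ_B ∘ (s ⊗ id_B) : S ⊗ B → B and id_S ⊗ f); and whenever (λ_C ∘ (s ⊗ id_C)) ∘ f' = (λ_C ∘ (s ⊗ id_C)) ∘ g' for parallel morphisms f', g' : B → S ⊗ C, there is a morphism in Σ, namely λ_B ∘ (s ⊗ id_B), with f' ∘ (λ_B ∘ (s ⊗ id_B)) = g' ∘ (λ_B ∘ (s ⊗ id_B)). -/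
/-!
A subunit `s : S ⟶ 𝟙_ C` becomes invertible after whiskering with any object that has `S` as a
tensor factor (`IsSubunit.isIso_whiskerRight`), on either side thanks to the braiding.

* Composition: for subunits `s`, `t` the morphism `s ⊗ t`, viewed as a map `S ⊗ T ⟶ 𝟙_ C`, is again
  a subunit (`IsSubunit.comp`). It is mono by firmness, and its whiskering with `S ⊗ T` is
  a composite of whiskerings of `s` and `t` with objects having `S`, respectively `T`, as a factor.
* The Ore square is the interchange law together with naturality of the left unitor.
* Cancellation: by the Ore square, precomposing `f'` with the restriction to `S` factors through
  `S ◁ f'`, and `S ◁ f' = S ◁ g'` because `S ◁ (s ▷ D)` is invertible.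
-/

open CategoryTheory MonoidalCategory

/-- A subunit in a braided monoidal category: a monomorphism into the tensor unit
such that `s ▷ S` is invertible. -/
def IsSubunit {C : Type*} [Category C] [MonoidalCategory C] {S : C} (s : S ⟶ 𝟙_ C) : Prop :=
  Mono s ∧ IsIso (s ▷ S)

/-- The class `Σ` of morphisms consisting of all identities together with all morphisms
of the form `λ_A ∘ (s ⊗ id_A) : S ⊗ A ⟶ A` for a subunit `s` (up to the canonical
identification of the source with `S ⊗ A`). -/
def SigmaClass (C : Type*) [Category C] [MonoidalCategory C] [BraidedCategory C] :
    MorphismProperty C := fun X Y f =>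
  (∃ h : X = Y, f = eqToHom h) ∨
  ∃ (S : C) (s : S ⟶ 𝟙_ C) (e : X ≅ S ⊗ Y),
    IsSubunit s ∧ f = e.hom ≫ (s ▷ Y) ≫ (λ_ Y).hom

section

variable {C : Type*} [Category C] [MonoidalCategory C]

lemma IsSubunit.isIso_whiskerRight {S : C} {s : S ⟶ 𝟙_ C} (hs : IsSubunit s) {X A : C}
    (e : X ≅ S ⊗ A) : IsIso (s ▷ X) := by
  have := hs.2
  have h : s ▷ X = S ◁ e.hom ≫ s ▷ (S ⊗ A) ≫ 𝟙_ C ◁ e.inv := by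
    rw [whisker_exchange_assoc, ← whiskerLeft_comp]
    simp
  rw [h, whiskerRight_tensor]
  infer_instance

lemma IsSubunit.isIso_whiskerLeft [BraidedCategory C] {S : C} {s : S ⟶ 𝟙_ C} (hs : IsSubunit s) :
    IsIso (S ◁ s) := by
  have := hs.2
  have h : S ◁ s = (β_ S S).hom ≫ s ▷ S ≫ (β_ S (𝟙_ C)).inv := by
    rw [← BraidedCategory.braiding_naturality_right_assoc]
    simp
  rw [h]
  infer_instance

/-- The product of two subunits is a subunit as soon as `s ▷ T` is mono. -/
lemma IsSubunit.comp [BraidedCategory C] {S T : C} {s : S ⟶ 𝟙_ C} {t : T ⟶ 𝟙_ C}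
    (hs : IsSubunit s) (ht : IsSubunit t) (hst : Mono (s ▷ T)) :
    IsSubunit (s ▷ T ≫ (λ_ T).hom ≫ t) := by
  have := ht.1
  refine ⟨inferInstance, ?_⟩
  have h₁ : IsIso (t ▷ (S ⊗ T)) := ht.isIso_whiskerRight (β_ S T)
  -- `T ⊗ (S ⊗ T) ≅ S ⊗ (T ⊗ T)` by braiding the first two factors
  have h₂ : IsIso (s ▷ (T ⊗ (S ⊗ T))) := hs.isIso_whiskerRight
    ((α_ T S T).symm ≪≫ whiskerRightIso (β_ T S) T ≪≫ α_ S T T)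
  have h₃ : s ▷ T ▷ (S ⊗ T) = (α_ S T (S ⊗ T)).hom ≫ s ▷ (T ⊗ (S ⊗ T)) ≫
      (α_ (𝟙_ C) T (S ⊗ T)).inv := by
    rw [whiskerRight_tensor]
    simp
  rw [comp_whiskerRight, comp_whiskerRight, h₃]
  infer_instance

lemma restriction_naturality {S B D : C} (s : S ⟶ 𝟙_ C) (f : B ⟶ D) :
    (S ◁ f) ≫ (s ▷ D) ≫ (λ_ D).hom = ((s ▷ B) ≫ (λ_ B).hom) ≫ f := by
  rw [whisker_exchange_assoc, leftUnitor_naturality, Category.assoc]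

end

/-- Proposition 5.4 of "Tensor topology": in a firm braided monoidal category, the class
`Σ` of identities and restriction morphisms `λ_A ∘ (s ⊗ id_A)` admits a calculus of
right fractions: it contains identities, is closed under composition, satisfies the
right Ore condition (with the stated witnesses), and satisfies right cancellation. -/
theorem stmt12 {C : Type*} [Category C] [MonoidalCategory C] [BraidedCategory C]
    (firm : ∀ {S T : C} (s : S ⟶ 𝟙_ C) (t : T ⟶ 𝟙_ C),
      IsSubunit s → IsSubunit t → Mono (s ▷ T)) :
    -- contains all identities
    (∀ X : C, SigmaClass C (𝟙 X)) ∧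
    -- closed under composition
    (∀ {X Y Z : C} (f : X ⟶ Y) (g : Y ⟶ Z),
      SigmaClass C f → SigmaClass C g → SigmaClass C (f ≫ g)) ∧
    -- right Ore condition, witnessed by `λ_B ∘ (s ⊗ id_B)` and `id_S ⊗ f`
    (∀ {B D S : C} (s : S ⟶ 𝟙_ C), IsSubunit s → ∀ f : B ⟶ D,
      SigmaClass C ((s ▷ B) ≫ (λ_ B).hom) ∧
      (S ◁ f) ≫ (s ▷ D) ≫ (λ_ D).hom = ((s ▷ B) ≫ (λ_ B).hom) ≫ f) ∧
    -- right cancellation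
    (∀ {B D S : C} (s : S ⟶ 𝟙_ C), IsSubunit s → ∀ f' g' : B ⟶ S ⊗ D,
      f' ≫ (s ▷ D) ≫ (λ_ D).hom = g' ≫ (s ▷ D) ≫ (λ_ D).hom →
      ((s ▷ B) ≫ (λ_ B).hom) ≫ f' = ((s ▷ B) ≫ (λ_ B).hom) ≫ g') := by
  refine ⟨fun X => Or.inl ⟨rfl, rfl⟩, ?_, ?_, ?_⟩
  · rintro X Y Z f g (⟨rfl, rfl⟩ | ⟨S, s, e, hs, rfl⟩) hg
    · simpa using hg
    rcases hg with ⟨rfl, rfl⟩ | ⟨T, t, e', ht, rfl⟩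
    · exact Or.inr ⟨S, s, e, hs, by simp⟩
    refine Or.inr ⟨S ⊗ T, s ▷ T ≫ (λ_ T).hom ≫ t,
      e ≪≫ whiskerLeftIso S e' ≪≫ (α_ S T Z).symm, hs.comp ht (firm s t hs ht), ?_⟩
    have h := restriction_naturality s e'.hom
    simp only [Category.assoc] at h
    simp only [Category.assoc, Iso.trans_hom, whiskerLeftIso_hom, Iso.symm_hom,
      comp_whiskerRight, ← reassoc_of% h]
    simp
  · intro B D S s hs f
    exact ⟨Or.inr ⟨S, s, Iso.refl _, hs, by simp⟩, restriction_naturality s f⟩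
  · intro B D S s hs f' g' h
    have := hs.isIso_whiskerLeft
    have h₁ : IsIso (S ◁ s ▷ D) := by
      have h' : S ◁ s ▷ D = (α_ S S D).inv ≫ (S ◁ s) ▷ D ≫ (α_ S (𝟙_ C) D).hom := by
        simp
      rw [h']
      infer_instance
    have h₂ : f' ≫ s ▷ D = g' ≫ s ▷ D := by
      simpa only [← Category.assoc, cancel_mono] using h
    have h₃ : S ◁ f' = S ◁ g' := by
      rw [← cancel_mono (S ◁ s ▷ D), ← whiskerLeft_comp, ← whiskerLeft_comp, h₂]
    rw [← restriction_naturality, ← restriction_naturality, h₃]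
end

section
/- Let C be a firm braided monoidal category and L a complete lattice. There is a bijective correspondence between support data on C valued in L and monotone maps ISub(C) → L: every support datum restricts to a monotone map on subunits, and conversely every monotone map g : ISub(C) → L extends to a unique support datum F via F(f) = ⨅ { g(s) | s a subunit to which f restricts }, and this extension agrees with g on subunits. -/
/-!
Up to the unitor isomorphisms, `t ▷ 𝟙_ C` followed by `λ_ (𝟙_ C)` is `t` itself, so a morphism
`s : S ⟶ 𝟙_ C` restricts to `t` exactly when `s` factors through `t` (`restricts_unit_iff`), that is,
when `s ≤ t` as subobjects of the unit. Hence `g s` is the least value of `g` over the subunits to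
which `s` restricts, so the infimum formula returns `g` on subunits. Both support datum axioms for
the extension, and its uniqueness, follow from this and the antitonicity of infima.
-/

open CategoryTheory MonoidalCategory

/-- A morphism `f : A ⟶ B` restricts to a subunit `s : S ⟶ 𝟙_C` when it factors
through `λ_B ∘ (s ⊗ id_B) : S ⊗ B ⟶ B`. -/
def Restricts {C : Type*} [Category C] [MonoidalCategory C] {A B S : C}
    (f : A ⟶ B) (s : S ⟶ 𝟙_ C) : Prop :=
  ∃ g : A ⟶ S ⊗ B, g ≫ (s ▷ B) ≫ (λ_ B).hom = f

/-- A support datum on `C` valued in a complete lattice `L`. -/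
def IsSupportDatum (C : Type*) [Category C] [MonoidalCategory C] [BraidedCategory C]
    {L : Type*} [CompleteLattice L] (F : ∀ A B : C, (A ⟶ B) → L) : Prop :=
  (∀ {A B A' B' : C} (f : A ⟶ B) (g : A' ⟶ B'),
    (∀ {S : C} (s : S ⟶ 𝟙_ C), IsSubunit s → Restricts g s → Restricts f s) →
    F A B f ≤ F A' B' g) ∧
  (∀ {A B : C} (f : A ⟶ B),
    F A B f =
      sInf {x : L | ∃ (S : C) (s : S ⟶ 𝟙_ C), IsSubunit s ∧ Restricts f s ∧
        x = F S (𝟙_ C) s})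

/-- For morphisms into the unit, restriction is the subobject order. -/
lemma restricts_unit_iff {C : Type*} [Category C] [MonoidalCategory C] {S T : C}
    (s : S ⟶ 𝟙_ C) (t : T ⟶ 𝟙_ C) : Restricts s t ↔ ∃ f : S ⟶ T, f ≫ t = s := by
  have key : (t ▷ 𝟙_ C) ≫ (λ_ (𝟙_ C)).hom = (ρ_ T).hom ≫ t := by
    rw [unitors_equal, rightUnitor_naturality]
  unfold Restricts
  rw [key]
  constructor
  · rintro ⟨h, hh⟩
    exact ⟨h ≫ (ρ_ T).hom, by rw [Category.assoc, hh]⟩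
  · rintro ⟨f, hf⟩
    exact ⟨f ≫ (ρ_ T).inv, by simp [hf]⟩

/-- A monotone map on subunits is recovered by the infimum formula: `s` restricts to itself, and
every other subunit to which it restricts lies above it. -/
lemma sInf_restricts_eq {C : Type*} [Category C] [MonoidalCategory C]
    {L : Type*} [CompleteLattice L] (g : ∀ S : C, (S ⟶ 𝟙_ C) → L)
    (hg : ∀ {S T : C} (s : S ⟶ 𝟙_ C) (t : T ⟶ 𝟙_ C), IsSubunit s → IsSubunit t →
      (∃ f : S ⟶ T, f ≫ t = s) → g S s ≤ g T t)
    {S : C} (s : S ⟶ 𝟙_ C) (hs : IsSubunit s) :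
    sInf {x : L | ∃ (T : C) (t : T ⟶ 𝟙_ C), IsSubunit t ∧ Restricts s t ∧ x = g T t}
      = g S s := by
  apply le_antisymm
  · exact sInf_le ⟨S, s, hs, (restricts_unit_iff s s).2 ⟨𝟙 S, Category.id_comp s⟩, rfl⟩
  · apply le_sInf
    rintro x ⟨T, t, ht, hst, rfl⟩
    exact hg s t hs ht ((restricts_unit_iff s t).1 hst)

/-- The infimum formula only depends on the values at subunits. -/
lemma sInf_restricts_congr {C : Type*} [Category C] [MonoidalCategory C]
    {L : Type*} [CompleteLattice L] {g g' : ∀ S : C, (S ⟶ 𝟙_ C) → L}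
    (h : ∀ {S : C} (s : S ⟶ 𝟙_ C), IsSubunit s → g S s = g' S s) {A B : C} (f : A ⟶ B) :
    sInf {x : L | ∃ (S : C) (s : S ⟶ 𝟙_ C), IsSubunit s ∧ Restricts f s ∧ x = g S s} =
      sInf {x : L | ∃ (S : C) (s : S ⟶ 𝟙_ C), IsSubunit s ∧ Restricts f s ∧ x = g' S s} := by
  congr 1
  ext x
  constructor
  · rintro ⟨S, s, hs, hf, rfl⟩
    exact ⟨S, s, hs, hf, h s hs⟩
  · rintro ⟨S, s, hs, hf, rfl⟩
    exact ⟨S, s, hs, hf, (h s hs).symm⟩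

/-- Proposition 6.3 of "Tensor topology": support data on a firm category `C` valued in
a complete lattice `L` correspond bijectively to monotone maps `ISub(C) → L`: every
support datum restricts to a monotone map on subunits; conversely every monotone map `g`
extends via `F f = ⨅ { g s | f restricts to s }` to a support datum agreeing with `g`
on subunits, and this is the unique such support datum. -/
theorem stmt14 {C : Type*} [Category C] [MonoidalCategory C] [BraidedCategory C]
    (firm : ∀ {S T : C} (s : S ⟶ 𝟙_ C) (t : T ⟶ 𝟙_ C),
      IsSubunit s → IsSubunit t → Mono (s ▷ T))
    {L : Type*} [CompleteLattice L] :
    -- every support datum restricts to a monotone map on subunits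
    (∀ F : ∀ A B : C, (A ⟶ B) → L, IsSupportDatum C F →
      ∀ {S T : C} (s : S ⟶ 𝟙_ C) (t : T ⟶ 𝟙_ C), IsSubunit s → IsSubunit t →
        (∃ f : S ⟶ T, f ≫ t = s) → F S (𝟙_ C) s ≤ F T (𝟙_ C) t) ∧
    -- conversely, every monotone map on subunits extends uniquely to a support datum
    (∀ g : ∀ S : C, (S ⟶ 𝟙_ C) → L,
      (∀ {S T : C} (s : S ⟶ 𝟙_ C) (t : T ⟶ 𝟙_ C), IsSubunit s → IsSubunit t →
        (∃ f : S ⟶ T, f ≫ t = s) → g S s ≤ g T t) →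
      IsSupportDatum C (fun A B f =>
        sInf {x : L | ∃ (S : C) (s : S ⟶ 𝟙_ C), IsSubunit s ∧ Restricts f s ∧
          x = g S s}) ∧
      -- the extension agrees with `g` on subunits
      (∀ {S : C} (s : S ⟶ 𝟙_ C), IsSubunit s →
        sInf {x : L | ∃ (T : C) (t : T ⟶ 𝟙_ C), IsSubunit t ∧ Restricts s t ∧
          x = g T t} = g S s) ∧
      -- uniqueness
      (∀ F : ∀ A B : C, (A ⟶ B) → L, IsSupportDatum C F →
        (∀ {S : C} (s : S ⟶ 𝟙_ C), IsSubunit s → F S (𝟙_ C) s = g S s) →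
        ∀ (A B : C) (f : A ⟶ B),
          F A B f = sInf {x : L | ∃ (S : C) (s : S ⟶ 𝟙_ C), IsSubunit s ∧
            Restricts f s ∧ x = g S s})) := by
  refine ⟨?_, fun g hg => ⟨⟨?_, ?_⟩, ?_, ?_⟩⟩
  · rintro F hF S T s t - - ⟨f, rfl⟩
    refine hF.1 _ _ fun u _ htu => ?_
    obtain ⟨k, rfl⟩ := (restricts_unit_iff t u).1 htu
    exact (restricts_unit_iff _ u).2 ⟨f ≫ k, Category.assoc _ _ _⟩
  · intro A B A' B' f f' h
    apply sInf_le_sInf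
    rintro x ⟨S, s, hs, hf, rfl⟩
    exact ⟨S, s, hs, h s hs hf, rfl⟩
  · intro A B f
    exact sInf_restricts_congr (fun s hs => (sInf_restricts_eq g hg s hs).symm) f
  · intro S s hs
    exact sInf_restricts_eq g hg s hs
  · intro F hF hFg A B f
    rw [hF.2 f]
    exact sInf_restricts_congr (g := fun S s => F S (𝟙_ C) s) hFg f
end
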